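/- arXiv:2412.01574 — 2 statements merged into one kernel-verified Lean document; each statement's English description precedes it below -/
import Mathlib

section
/- For every integer ℓ ≥ 1, the map φ_ℓ that sends a non-crossing partition π of {1,…,ℓ} to the ℓ-tuple (s_1,…,s_ℓ) defined by s_i = |B| if i is the largest element of a block B of π and s_i = 0 otherwise, is a bijection from NC(ℓ) onto S(ℓ). -/
/-- A finite partition of `{0,…,ℓ-1}` (i.e. of `Fin ℓ`) is non-crossing if there are no
`a < b < c < d` with `a, c` in one block and `b, d` in a different block. -/
def IsNonCrossing {ℓ : ℕ} (π : Finpartition (Finset.univ : Finset (Fin ℓ))) : Prop :=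
  ∀ a b c d : Fin ℓ, a < b → b < c → c < d →
    ∀ B₁ ∈ π.parts, ∀ B₂ ∈ π.parts, a ∈ B₁ → c ∈ B₁ → b ∈ B₂ → d ∈ B₂ → B₁ = B₂

/-- `S(ℓ)`: tuples `(s_1,…,s_ℓ)` of nonnegative integers whose partial sums satisfy
`s_1 + ⋯ + s_m ≤ m` for every `m ∈ {1,…,ℓ}` and with `s_1 + ⋯ + s_ℓ = ℓ`
(here indexed by `Fin ℓ`, zero-based). -/
def Sset (ℓ : ℕ) : Set (Fin ℓ → ℕ) :=
  {s | (∀ m : Fin ℓ, ∑ j ∈ Finset.univ.filter (fun j => j ≤ m), s j ≤ (m : ℕ) + 1) ∧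
        ∑ j, s j = ℓ}

/-- The map `φ_ℓ` sending a partition `π` of `Fin ℓ` to the tuple `(s_i)` with
`s_i = |B|` if `i` is the largest element of the block `B` of `π` containing it,
and `s_i = 0` otherwise. -/
def phiNC {ℓ : ℕ} (π : Finpartition (Finset.univ : Finset (Fin ℓ))) : Fin ℓ → ℕ :=
  fun i => ∑ B ∈ π.parts, if i ∈ B ∧ ∀ j ∈ B, j ≤ i then B.card else 0

/-- `M` gives the maximum of the block of each element. -/
def IsMaxMap {ℓ : ℕ} (π : Finpartition (Finset.univ : Finset (Fin ℓ))) (M : Fin ℓ → Fin ℓ) : Prop :=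
  (∀ x, M x ∈ π.part x) ∧ ∀ x y, y ∈ π.part x → y ≤ M x

/-- Stack height after `m` steps. -/
def hgt {ℓ : ℕ} (s : Fin ℓ → ℕ) (m : ℕ) : ℤ :=
  (m : ℤ) - ∑ j ∈ Finset.univ.filter (fun j : Fin ℓ => (j : ℕ) < m), (s j : ℤ)

/-- `t` is the time at which `x` is popped. -/
def IsPop {ℓ : ℕ} (s : Fin ℓ → ℕ) (x t : Fin ℓ) : Prop :=
  x ≤ t ∧ hgt s (t + 1) ≤ hgt s x ∧ ∀ y : ℕ, (x : ℕ) < y → y ≤ t → hgt s x < hgt s y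

lemma part_eq_of_mem' {ℓ : ℕ} (π : Finpartition (Finset.univ : Finset (Fin ℓ))) {x y : Fin ℓ}
    (h : y ∈ π.part x) : π.part y = π.part x :=
  π.part_eq_of_mem (by simp) h

lemma mem_part_self {ℓ : ℕ} (π : Finpartition (Finset.univ : Finset (Fin ℓ))) (x : Fin ℓ) :
    x ∈ π.part x := by simp

lemma isMaxMap_exists {ℓ : ℕ} (π : Finpartition (Finset.univ : Finset (Fin ℓ))) :
    ∃ M, IsMaxMap π M :=
  ⟨fun x => (π.part x).max' ⟨x, mem_part_self π x⟩, fun x => Finset.max'_mem _ _,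
    fun x y hy => Finset.le_max' _ _ hy⟩

lemma IsMaxMap.mem_iff {ℓ : ℕ} {π : Finpartition (Finset.univ : Finset (Fin ℓ))} {M : Fin ℓ → Fin ℓ}
    (h : IsMaxMap π M) (x y : Fin ℓ) : y ∈ π.part x ↔ M y = M x := by
  constructor
  · intro hy
    have e := part_eq_of_mem' π hy
    have h1 := h.1 x
    have h2 := h.1 y
    apply le_antisymm
    · exact h.2 x _ (e ▸ h2)
    · exact h.2 y _ (e ▸ h1)
  · intro e
    have h1 := part_eq_of_mem' π (h.1 x)
    have h2 := part_eq_of_mem' π (h.1 y)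
    rw [e] at h2
    rw [← h1, h2]
    exact mem_part_self π y

lemma phi_eq {ℓ : ℕ} {π : Finpartition (Finset.univ : Finset (Fin ℓ))} {M : Fin ℓ → Fin ℓ}
    (h : IsMaxMap π M) (i : Fin ℓ) :
    phiNC π i = (Finset.univ.filter (fun x => M x = i)).card := by
  unfold phiNC
  have hi : π.part i ∈ π.parts := by simp
  rw [Finset.sum_eq_single_of_mem (π.part i) hi]
  · split_ifs with hc
    · congr 1
      ext x
      have hMi : M i = i := le_antisymm (hc.2 _ (h.1 i)) (h.2 _ _ (mem_part_self π i))
      rw [h.mem_iff]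
      simp [hMi]
    · symm
      rw [Finset.card_eq_zero, Finset.filter_eq_empty_iff]
      intro x _ hx
      apply hc
      refine ⟨mem_part_self π i, fun j hj => ?_⟩
      have h1 := h.1 x
      rw [hx] at h1
      rw [part_eq_of_mem' π h1] at hj
      exact hx ▸ h.2 x j hj
  · intro B hB hne
    rw [if_neg]
    rintro ⟨h1, -⟩
    exact hne (π.part_eq_of_mem hB h1).symm

lemma sum_phi {ℓ : ℕ} {π : Finpartition (Finset.univ : Finset (Fin ℓ))} {M : Fin ℓ → Fin ℓ}
    (h : IsMaxMap π M) (p : Fin ℓ → Prop) [DecidablePred p] :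
    ∑ j ∈ Finset.univ.filter p, phiNC π j = (Finset.univ.filter (fun x => p (M x))).card := by
  rw [Finset.card_eq_sum_card_fiberwise (f := M) (t := Finset.univ.filter p)]
  · refine Finset.sum_congr rfl fun j hj => ?_
    rw [phi_eq h, Finset.filter_filter]
    congr 1
    ext x
    simp only [Finset.mem_filter, Finset.mem_univ, true_and] at hj ⊢
    constructor
    · rintro rfl
      exact ⟨hj, rfl⟩
    · exact fun h => h.2
  · intro x hx
    simpa using hx

lemma le_M {ℓ : ℕ} {π : Finpartition (Finset.univ : Finset (Fin ℓ))} {M : Fin ℓ → Fin ℓ}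
    (h : IsMaxMap π M) (x : Fin ℓ) : x ≤ M x := h.2 _ _ (mem_part_self π x)

lemma card_lt_fin {ℓ : ℕ} (m : ℕ) (hm : m ≤ ℓ) :
    (Finset.univ.filter (fun x : Fin ℓ => (x : ℕ) < m)).card = m := by
  rw [← Finset.card_map Fin.valEmbedding]
  conv_rhs => rw [← Finset.card_range m]
  congr 1
  ext a
  simp only [Finset.mem_map, Finset.mem_filter, Finset.mem_univ, true_and, Fin.valEmbedding_apply,
    Finset.mem_range]
  constructor
  · rintro ⟨x, hx, rfl⟩
    exact hx
  · intro ha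
    exact ⟨⟨a, by omega⟩, ha, rfl⟩

lemma hgt_phi {ℓ : ℕ} {π : Finpartition (Finset.univ : Finset (Fin ℓ))} {M : Fin ℓ → Fin ℓ}
    (h : IsMaxMap π M) (m : ℕ) (hm : m ≤ ℓ) :
    hgt (phiNC π) m =
      (Finset.univ.filter (fun x : Fin ℓ => (x : ℕ) < m ∧ m ≤ (M x : ℕ))).card := by
  unfold hgt
  rw [← Nat.cast_sum, sum_phi h]
  have h1 := card_lt_fin (ℓ := ℓ) m hm
  rw [← Finset.card_filter_add_card_filter_not (fun x : Fin ℓ => (M x : ℕ) < m),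
    Finset.filter_filter, Finset.filter_filter] at h1
  have e1 : (Finset.univ.filter (fun x : Fin ℓ => (x : ℕ) < m ∧ (M x : ℕ) < m))
      = Finset.univ.filter (fun x : Fin ℓ => (M x : ℕ) < m) := by
    ext x
    have := le_M h x
    simp only [Finset.mem_filter, Finset.mem_univ, true_and]
    omega
  have e2 : (Finset.univ.filter (fun x : Fin ℓ => (x : ℕ) < m ∧ ¬ (M x : ℕ) < m))
      = Finset.univ.filter (fun x : Fin ℓ => (x : ℕ) < m ∧ m ≤ (M x : ℕ)) := by
    ext x
    simp
  rw [e1, e2] at h1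
  omega

lemma nc_M {ℓ : ℕ} {π : Finpartition (Finset.univ : Finset (Fin ℓ))} {M : Fin ℓ → Fin ℓ}
    (h : IsMaxMap π M) (hn : IsNonCrossing π) {x z : Fin ℓ} (h1 : z < x) (h2 : x < M z)
    (h3 : M z < M x) : False := by
  have := hn z x (M z) (M x) h1 h2 h3 (π.part z) (by simp) (π.part x) (by simp)
    (mem_part_self π z) (h.1 z) (mem_part_self π x) (h.1 x)
  have h4 : z ∈ π.part x := this ▸ mem_part_self π z
  rw [h.mem_iff] at h4
  exact h3.ne h4

lemma isPop_M {ℓ : ℕ} {π : Finpartition (Finset.univ : Finset (Fin ℓ))} {M : Fin ℓ → Fin ℓ}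
    (h : IsMaxMap π M) (hn : IsNonCrossing π) (x : Fin ℓ) : IsPop (phiNC π) x (M x) := by
  have idem : ∀ x, M (M x) = M x := fun x => (h.mem_iff _ _).1 (h.1 x)
  refine ⟨le_M h x, ?_, ?_⟩
  · rw [hgt_phi h _ (by omega), hgt_phi h _ (by omega)]
    norm_cast
    apply Finset.card_le_card
    intro z hz
    simp only [Finset.mem_filter, Finset.mem_univ, true_and] at hz ⊢
    have hx := le_M h x
    have hlt : M x < M z := by omega
    refine ⟨?_, by omega⟩
    by_contra hc
    have hzx : z ≠ x := by
      rintro rfl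
      omega
    have hzM : z ≠ M x := by
      rintro rfl
      rw [idem] at hlt
      omega
    exact nc_M h hn (z := x) (x := z) (by omega) (by omega) hlt
  · intro y hy hyM
    rw [hgt_phi h _ (by omega), hgt_phi h _ (by omega)]
    norm_cast
    apply Finset.card_lt_card
    rw [Finset.ssubset_iff_of_subset]
    · refine ⟨x, ?_, ?_⟩ <;> simp [hy, hyM]
    · intro z hz
      simp only [Finset.mem_filter, Finset.mem_univ, true_and] at hz ⊢
      refine ⟨by omega, ?_⟩
      by_contra hc
      have hne : x ≠ M z := by
        intro e
        have := idem z
        rw [← e] at this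
        omega
      exact nc_M h hn (z := z) (x := x) (by omega) (by omega) (by omega)

lemma isPop_unique {ℓ : ℕ} {s : Fin ℓ → ℕ} {x t t' : Fin ℓ} (h : IsPop s x t) (h' : IsPop s x t') :
    t = t' := by
  obtain ⟨a1, a2, a3⟩ := h
  obtain ⟨b1, b2, b3⟩ := h'
  rcases lt_trichotomy t t' with hl | hl | hl
  · have := b3 (t + 1) (by omega) (by omega)
    omega
  · exact hl
  · have := a3 (t' + 1) (by omega) (by omega)
    omega

lemma hgt_zero {ℓ : ℕ} (s : Fin ℓ → ℕ) : hgt s 0 = 0 := by simp [hgt]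

lemma hgt_succ {ℓ : ℕ} (s : Fin ℓ → ℕ) (x : Fin ℓ) :
    hgt s ((x : ℕ) + 1) = hgt s x + 1 - s x := by
  unfold hgt
  have : Finset.univ.filter (fun j : Fin ℓ => (j : ℕ) < (x : ℕ) + 1)
      = insert x (Finset.univ.filter (fun j : Fin ℓ => (j : ℕ) < x)) := by
    ext j
    simp only [Finset.mem_filter, Finset.mem_univ, true_and, Finset.mem_insert]
    omega
  rw [this, Finset.sum_insert (by simp)]
  push_cast
  ring

lemma hgt_nonneg {ℓ : ℕ} {s : Fin ℓ → ℕ} (hs : s ∈ Sset ℓ) (x : Fin ℓ) :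
    0 ≤ hgt s ((x : ℕ) + 1) := by
  have h := hs.1 x
  unfold hgt
  have : Finset.univ.filter (fun j : Fin ℓ => (j : ℕ) < (x : ℕ) + 1)
      = Finset.univ.filter (fun j : Fin ℓ => j ≤ x) := by
    ext j
    simp only [Finset.mem_filter, Finset.mem_univ, true_and]
    omega
  rw [this, ← Nat.cast_sum]
  omega

lemma hgt_last {ℓ : ℕ} {s : Fin ℓ → ℕ} (hs : s ∈ Sset ℓ) : hgt s ℓ = 0 := by
  have h := hs.2
  unfold hgt
  rw [Finset.filter_true_of_mem (by simp), ← Nat.cast_sum, h]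
  simp

lemma hgt_nonneg' {ℓ : ℕ} {s : Fin ℓ → ℕ} (hs : s ∈ Sset ℓ) (x : Fin ℓ) :
    0 ≤ hgt s (x : ℕ) := by
  rcases Nat.eq_zero_or_pos (x : ℕ) with h | h
  · rw [h, hgt_zero]
  · have := hgt_nonneg hs ⟨(x : ℕ) - 1, by omega⟩
    simpa [Nat.sub_add_cancel h] using this

lemma isPop_exists {ℓ : ℕ} {s : Fin ℓ → ℕ} (hs : s ∈ Sset ℓ) (x : Fin ℓ) : ∃ t, IsPop s x t := by
  classical
  have hex : ∃ t : ℕ, (x : ℕ) ≤ t ∧ t < ℓ ∧ hgt s (t + 1) ≤ hgt s x := by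
    have hxl := x.isLt
    refine ⟨ℓ - 1, by omega, by omega, ?_⟩
    rw [Nat.sub_add_cancel (by omega), hgt_last hs]
    exact hgt_nonneg' hs x
  obtain ⟨h1, h2, h3⟩ := Nat.find_spec hex
  refine ⟨⟨Nat.find hex, h2⟩, h1, h3, fun y hy hyt => ?_⟩
  by_contra hc
  simp only at hyt
  refine Nat.find_min hex (m := y - 1) (by omega) ⟨by omega, by omega, ?_⟩
  rw [Nat.sub_add_cancel (by omega)]
  exact not_lt.1 hc

lemma isPop_card {ℓ : ℕ} {s : Fin ℓ → ℕ} (hs : s ∈ Sset ℓ) (T : Fin ℓ → Fin ℓ)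
    (hT : ∀ x, IsPop s x (T x)) (t : Fin ℓ) :
    (Finset.univ.filter (fun x => T x = t)).card = s t := by
  have hc : (Finset.Ico (hgt s ((t : ℕ) + 1)) (hgt s t + 1)).card = s t := by
    rw [Int.card_Ico, hgt_succ]
    omega
  rw [← hc]
  refine Finset.card_bij (fun x _ => hgt s (x : ℕ)) ?_ ?_ ?_
  · intro x hx
    simp only [Finset.mem_filter, Finset.mem_univ, true_and] at hx
    subst hx
    obtain ⟨h1, h2, h3⟩ := hT x
    rw [Finset.mem_Ico]
    refine ⟨h2, ?_⟩
    rcases h1.eq_or_lt with h | h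
    · rw [← h]
      omega
    · have := h3 (T x) h le_rfl
      omega
  · have key : ∀ x y : Fin ℓ, T x = t → T y = t → x < y → hgt s x < hgt s y := by
      intro x y hx hy hxy
      refine (hT x).2.2 y hxy ?_
      rw [hx, ← hy]
      exact (hT y).1
    intro x hx y hy hxy
    simp only [Finset.mem_filter, Finset.mem_univ, true_and] at hx hy
    rcases lt_trichotomy x y with h | h | h
    · have := key x y hx hy h
      omega
    · exact h
    · have := key y x hy hx h
      omega
  · intro h hh
    rw [Finset.mem_Ico] at hh
    have h0 := hgt_nonneg hs t
    have hne : (Finset.univ.filter (fun x : Fin ℓ => x ≤ t ∧ hgt s x ≤ h)).Nonempty := by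
      refine ⟨⟨0, by have := t.isLt; omega⟩, ?_⟩
      simp only [Finset.mem_filter, Finset.mem_univ, true_and]
      refine ⟨Nat.zero_le _, ?_⟩
      rw [hgt_zero]
      omega
    obtain ⟨x, hx, hmax⟩ := Finset.exists_max_image _ (fun x => x) hne
    simp only [Finset.mem_filter, Finset.mem_univ, true_and] at hx hmax
    have hlater : ∀ y : ℕ, (x : ℕ) < y → y ≤ t → h < hgt s y := by
      intro y hy hyt
      by_contra hc
      have := hmax ⟨y, by omega⟩ ⟨hyt, not_lt.1 hc⟩
      have : y ≤ (x : ℕ) := this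
      omega
    have hxh : hgt s x = h := by
      rcases hx.1.eq_or_lt with e | e
      · subst e
        omega
      · have h1 := hlater (x + 1) (by omega) (by omega)
        have h2 := hgt_succ s x
        omega
    refine ⟨x, ?_, hxh⟩
    simp only [Finset.mem_filter, Finset.mem_univ, true_and]
    refine isPop_unique (hT x) ⟨hx.1, by omega, ?_⟩
    rw [hxh]
    exact hlater

lemma isPop_nc {ℓ : ℕ} {s : Fin ℓ → ℕ} {a b c d t u : Fin ℓ} (hab : a < b) (hbc : b < c)
    (hcd : c < d) (ha : IsPop s a t) (hc : IsPop s c t) (hb : IsPop s b u) (hd : IsPop s d u) :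
    t = u := by
  have h1 := hc.1
  have h2 := hd.1
  rcases lt_trichotomy t u with hl | hl | hl
  · have e1 := hb.2.2 (t + 1) (by omega) (by omega)
    have e2 := ha.2.2 b hab (by omega)
    have e3 := ha.2.1
    omega
  · exact hl
  · have e1 := hc.2.2 (u + 1) (by omega) (by omega)
    have e2 := hb.2.2 c hbc (by omega)
    have e3 := hb.2.1
    omega

theorem stmt2 : ∀ ℓ : ℕ, 1 ≤ ℓ →
    Set.BijOn (phiNC (ℓ := ℓ))
      {π : Finpartition (Finset.univ : Finset (Fin ℓ)) | IsNonCrossing π} (Sset ℓ) := by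
  classical
  intro ℓ _
  refine ⟨?_, ?_, ?_⟩
  · intro π _
    obtain ⟨M, hM⟩ := isMaxMap_exists π
    refine ⟨fun m => ?_, ?_⟩
    · rw [sum_phi hM]
      rw [← card_lt_fin (ℓ := ℓ) ((m : ℕ) + 1) (by omega)]
      apply Finset.card_le_card
      intro x hx
      simp only [Finset.mem_filter, Finset.mem_univ, true_and] at hx ⊢
      have := le_M hM x
      omega
    · have := sum_phi hM (fun _ => True)
      simpa using this
  · intro π hπ π' hπ' he
    obtain ⟨M, hM⟩ := isMaxMap_exists π
    obtain ⟨M', hM'⟩ := isMaxMap_exists π'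
    have hMM : M = M' := by
      funext x
      have h1 := isPop_M hM hπ x
      have h2 := isPop_M hM' hπ' x
      rw [← he] at h2
      exact isPop_unique h1 h2
    subst hMM
    have hp : ∀ x, π.part x = π'.part x := by
      intro x
      ext y
      rw [hM.mem_iff, hM'.mem_iff]
    have hsub : ∀ π π' : Finpartition (Finset.univ : Finset (Fin ℓ)),
        (∀ x, π.part x = π'.part x) → π.parts ⊆ π'.parts := by
      intro π π' hp B hB
      obtain ⟨x, hx⟩ := π.nonempty_of_mem_parts hB
      rw [← π.part_eq_of_mem hB hx, hp]
      simp
    exact Finpartition.ext (Finset.Subset.antisymm (hsub _ _ hp) (hsub _ _ fun x => (hp x).symm))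
  · intro s hs
    choose T hT using isPop_exists hs
    let π : Finpartition (Finset.univ : Finset (Fin ℓ)) := Finpartition.ofSetoid (Setoid.ker T)
    have hmem : ∀ x y, y ∈ π.part x ↔ T x = T y := fun x y =>
      Finpartition.mem_part_ofSetoid_iff_rel
    have idem : ∀ x, T (T x) = T x := by
      intro x
      obtain ⟨h1, h2, h3⟩ := hT x
      refine isPop_unique (hT _) ⟨le_rfl, ?_, fun y hy hy' => by omega⟩
      rcases h1.eq_or_lt with h | h
      · rw [← h] at h2 ⊢
        exact h2
      · exact h2.trans (h3 (T x) h le_rfl).le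
    have hM : IsMaxMap π T := by
      refine ⟨fun x => ?_, fun x y hy => ?_⟩
      · rw [hmem, idem]
      · rw [hmem] at hy
        rw [hy]
        exact (hT y).1
    refine ⟨π, ?_, ?_⟩
    · intro a b c d hab hbc hcd B₁ h₁ B₂ h₂ ha hc hb hd
      rw [← π.part_eq_of_mem h₁ ha] at hc ⊢
      rw [← π.part_eq_of_mem h₂ hb] at hd ⊢
      rw [hmem] at hc hd
      have h1 := hT c
      have h2 := hT d
      rw [← hc] at h1
      rw [← hd] at h2
      have := isPop_nc hab hbc hcd (hT a) h1 (hT b) h2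
      symm
      apply part_eq_of_mem'
      rw [hmem, this]
    · funext i
      rw [phi_eq hM, isPop_card hs T hT]
end

section
/- Let μ be a compactly supported Borel probability measure on ℝ, let t ≥ 1, let f_1,…,f_t : ℝ → ℝ be continuous functions, and let Φ ∈ ℝ^{t×t} be strictly lower triangular. For a lower triangular matrix E ∈ ℝ^{t×t} and λ ∈ ℝ, write F(λ) := diag(f_1(λ),…,f_t(λ)); then I_t − F(λ)·Φ + E·Φ is lower triangular with unit diagonal, hence invertible, and one may define J_E(λ) := (I_t − F(λ)·Φ + E·Φ)^{−1}·(F(λ) − E). Then there exists exactly one lower triangular matrix E ∈ ℝ^{t×t} such that ∫ J_E(λ) dμ(λ) = 0 (the integral taken entrywise). -/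
open MeasureTheory

/-- A map that is strictly triangular with respect to a rank function has a unique fixed point. -/
theorem aux_fix {X : Type*} (d : X → ℕ) (N : ℕ) (hN : ∀ p, d p < N)
    (S : (X → ℝ) → Prop) (T : (X → ℝ) → (X → ℝ)) (x0 : X → ℝ) (h0 : S x0)
    (hS : ∀ x, S x → S (T x))
    (hT : ∀ x y, S x → S y → ∀ p, (∀ q, d q < d p → x q = y q) → T x p = T y p) :
    ∃ x, S x ∧ T x = x ∧ ∀ y, S y → T y = y → y = x := by
  have hSn : ∀ n, S (T^[n] x0) := by
    intro n
    induction n with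
    | zero => exact h0
    | succ n ih => rw [Function.iterate_succ_apply']; exact hS _ ih
  have key : ∀ n p, d p < n → T^[n + 1] x0 p = T^[n] x0 p := by
    intro n
    induction n with
    | zero => intro p hp; omega
    | succ n ih =>
      intro p hp
      rw [Function.iterate_succ_apply' T (n + 1), Function.iterate_succ_apply' T n]
      apply hT _ _ _ (hSn n) p
      · intro q hq
        rw [← Function.iterate_succ_apply' T n]
        exact ih q (by omega)
      · rw [← Function.iterate_succ_apply' T n]
        exact hSn (n + 1)
  have hfix : T (T^[N] x0) = T^[N] x0 := by
    funext p
    rw [← Function.iterate_succ_apply' T N]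
    exact key N p (hN p)
  refine ⟨T^[N] x0, hSn N, hfix, ?_⟩
  intro y hy hyf
  have : ∀ n p, d p < n → y p = T^[N] x0 p := by
    intro n
    induction n with
    | zero => intro p hp; omega
    | succ n ih =>
      intro p hp
      rw [← hyf, ← hfix]
      exact hT _ _ hy (hSn N) p (fun q hq => ih q (by omega))
  funext p
  exact this N p (hN p)

section
variable {t : ℕ} (Φ : Matrix (Fin t) (Fin t) ℝ)

theorem aux_det (hΦ : ∀ i j : Fin t, i ≤ j → Φ i j = 0)
    (G : Matrix (Fin t) (Fin t) ℝ) (hG : ∀ i j : Fin t, i < j → G i j = 0) :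
    (1 - G * Φ).det = 1 := by
  have hz : ∀ i j : Fin t, i ≤ j → (G * Φ) i j = 0 := by
    intro i j hij
    rw [Matrix.mul_apply]
    apply Finset.sum_eq_zero
    intro k _
    rcases lt_or_ge i k with h | h
    · rw [hG i k h, zero_mul]
    · rw [hΦ k j (h.trans hij), mul_zero]
  rw [Matrix.det_of_isLowerTriangular]
  · apply Finset.prod_eq_one
    intro i _
    simp [hz i i le_rfl]
  · intro i j hij
    have hij' : i < j := hij
    simp [hz i j hij'.le, Matrix.one_apply_ne hij'.ne]

theorem aux_rec (hΦ : ∀ i j : Fin t, i ≤ j → Φ i j = 0)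
    (G : Matrix (Fin t) (Fin t) ℝ) (hG : ∀ i j : Fin t, i < j → G i j = 0) (i j : Fin t) :
    ((1 - G * Φ)⁻¹ * G) i j =
      G i j + ∑ k, ∑ l, G i k * Φ k l * ((1 - G * Φ)⁻¹ * G) l j := by
  have hu : IsUnit (1 - G * Φ).det := by rw [aux_det Φ hΦ G hG]; exact isUnit_one
  have h1 : (1 - G * Φ) * ((1 - G * Φ)⁻¹ * G) = G := by
    rw [← Matrix.mul_assoc, Matrix.mul_nonsing_inv _ hu, Matrix.one_mul]
  set J := (1 - G * Φ)⁻¹ * G with hJ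
  have h2 : J = G + G * (Φ * J) := by
    rw [Matrix.sub_mul, Matrix.one_mul, Matrix.mul_assoc] at h1
    exact sub_eq_iff_eq_add.mp h1
  have h3 := congrFun (congrFun h2 i) j
  rw [h3, Matrix.add_apply, Matrix.mul_apply]
  congr 1
  apply Finset.sum_congr rfl
  intro k _
  rw [Matrix.mul_apply, Finset.mul_sum]
  apply Finset.sum_congr rfl
  intro l _
  ring

theorem aux_low (hΦ : ∀ i j : Fin t, i ≤ j → Φ i j = 0)
    (G : Matrix (Fin t) (Fin t) ℝ) (hG : ∀ i j : Fin t, i < j → G i j = 0) (j : Fin t) :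
    ∀ i, i < j → ((1 - G * Φ)⁻¹ * G) i j = 0 := by
  intro i
  induction i using WellFoundedLT.induction with
  | ind i ih =>
    intro hij
    rw [aux_rec Φ hΦ G hG, hG i j hij, zero_add]
    apply Finset.sum_eq_zero
    intro k _
    apply Finset.sum_eq_zero
    intro l _
    rcases lt_or_ge i k with h | h
    · rw [hG i k h]; ring
    rcases le_or_gt k l with h' | h'
    · rw [hΦ k l h']; ring
    · rw [ih l (h'.trans_le h) ((h'.trans_le h).trans hij)]; ring

theorem aux_dep (hΦ : ∀ i j : Fin t, i ≤ j → Φ i j = 0)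
    (G G' : Matrix (Fin t) (Fin t) ℝ) (hG : ∀ i j : Fin t, i < j → G i j = 0)
    (hG' : ∀ i j : Fin t, i < j → G' i j = 0) (j : Fin t) :
    ∀ i : Fin t, (∀ a b : Fin t, (a : ℕ) + 1 - b < i + 1 - j → G a b = G' a b) →
      ((1 - G * Φ)⁻¹ * G) i j - G i j = ((1 - G' * Φ)⁻¹ * G') i j - G' i j := by
  intro i
  induction i using WellFoundedLT.induction with
  | ind i ih =>
    intro hag
    rw [aux_rec Φ hΦ G hG i j, aux_rec Φ hΦ G' hG' i j, add_sub_cancel_left, add_sub_cancel_left]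
    apply Finset.sum_congr rfl
    intro k _
    apply Finset.sum_congr rfl
    intro l _
    rcases lt_or_ge i k with h | h
    · rw [hG i k h, hG' i k h]; ring
    rcases le_or_gt k l with h' | h'
    · rw [hΦ k l h']; ring
    rcases lt_or_ge l j with h'' | h''
    · rw [aux_low Φ hΦ G hG j l h'', aux_low Φ hΦ G' hG' j l h'']; ring
    · have e1 : G i k = G' i k := hag i k (by omega)
      have e2 : G l j = G' l j := hag l j (by omega)
      have e3 := ih l (h'.trans_le h) (fun a b hab => hag a b (by omega))
      rw [e2] at e3
      rw [e1, sub_left_injective e3]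

end

theorem stmt19 (μ : Measure ℝ) [IsProbabilityMeasure μ]
    (K : Set ℝ) (hK : IsCompact K) (hKc : μ Kᶜ = 0)
    (t : ℕ) (ht : 1 ≤ t)
    (f : Fin t → ℝ → ℝ) (hf : ∀ i : Fin t, Continuous (f i))
    (Φ : Matrix (Fin t) (Fin t) ℝ)
    (hΦ : ∀ i j : Fin t, i ≤ j → Φ i j = 0) :
    ∃! E : Matrix (Fin t) (Fin t) ℝ,
      (∀ i j : Fin t, i < j → E i j = 0) ∧
      ∀ i j : Fin t,
        (∫ x, (((1 : Matrix (Fin t) (Fin t) ℝ) -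
              (Matrix.diagonal fun k => f k x) * Φ + E * Φ)⁻¹ *
            ((Matrix.diagonal fun k => f k x) - E)) i j ∂μ) = 0 := by
  have hre : ∀ (E : Matrix (Fin t) (Fin t) ℝ) (x : ℝ),
      (1 : Matrix (Fin t) (Fin t) ℝ) - (Matrix.diagonal fun k => f k x) * Φ + E * Φ
        = 1 - ((Matrix.diagonal fun k => f k x) - E) * Φ := by
    intro E x
    rw [Matrix.sub_mul]; abel
  simp only [hre]
  have hGl : ∀ (E : Matrix (Fin t) (Fin t) ℝ), (∀ i j : Fin t, i < j → E i j = 0) →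
      ∀ x, ∀ i j : Fin t, i < j → ((Matrix.diagonal fun k => f k x) - E) i j = 0 := by
    intro E hE x i j hij
    simp [hE i j hij, Matrix.diagonal_apply_ne _ hij.ne]
  have hcG : ∀ (E : Matrix (Fin t) (Fin t) ℝ),
      Continuous fun x => ((Matrix.diagonal fun k => f k x) - E) := by
    intro E
    exact (Continuous.matrix_diagonal (continuous_pi hf)).sub continuous_const
  have hint : ∀ g : ℝ → ℝ, Continuous g → Integrable g μ := by
    intro g hg
    have h1 : IntegrableOn g K μ := hg.continuousOn.integrableOn_compact hK
    have h2 : μ.restrict K = μ := Measure.restrict_eq_self_of_ae_mem (by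
      rw [ae_iff]; exact hKc)
    rwa [IntegrableOn, h2] at h1
  set J : Matrix (Fin t) (Fin t) ℝ → ℝ → Matrix (Fin t) (Fin t) ℝ := fun E x =>
    (1 - ((Matrix.diagonal fun k => f k x) - E) * Φ)⁻¹ * ((Matrix.diagonal fun k => f k x) - E)
    with hJ
  have hJint : ∀ (E : Matrix (Fin t) (Fin t) ℝ), (∀ i j : Fin t, i < j → E i j = 0) →
      ∀ i j, Integrable (fun x => J E x i j) μ := by
    intro E hE i j
    apply hint
    have e : J E = fun x => (1 - ((Matrix.diagonal fun k => f k x) - E) * Φ).adjugate *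
        ((Matrix.diagonal fun k => f k x) - E) := by
      funext x
      simp only [hJ]
      rw [Matrix.inv_def, aux_det Φ hΦ _ (hGl E hE x), Ring.inverse_one, one_smul]
    have hc : Continuous (J E) := by
      rw [e]
      refine Continuous.matrix_mul (Continuous.matrix_adjugate ?_) (hcG E)
      exact continuous_const.sub ((hcG E).matrix_mul continuous_const)
    exact hc.matrix_elem i j
  obtain ⟨x, hxS, hxT, hxu⟩ := aux_fix (X := Fin t × Fin t)
    (fun p => (p.1 : ℕ) + 1 - p.2) (t + 1) (fun p => by have := p.1.2; omega)
    (fun e => ∀ i j : Fin t, i < j → e (i, j) = 0)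
    (fun e p => e p + ∫ x, J (Matrix.of fun i j => e (i, j)) x p.1 p.2 ∂μ)
    (fun _ => 0) (fun _ _ _ => rfl)
    (by
      intro e he i j hij
      have : ∀ x, J (Matrix.of fun i j => e (i, j)) x i j = 0 := fun x =>
        aux_low Φ hΦ _ (hGl (Matrix.of fun i j => e (i, j)) he x) j i hij
      simp only [this, he i j hij, integral_zero, add_zero])
    (by
      rintro e e' he he' ⟨i, j⟩ hag
      have hsum : ∀ e : Fin t × Fin t → ℝ, (∀ i j : Fin t, i < j → e (i, j) = 0) →
          e (i, j) + ∫ x, J (Matrix.of fun i j => e (i, j)) x i j ∂μ =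
          ∫ x, (e (i, j) + J (Matrix.of fun i j => e (i, j)) x i j) ∂μ := by
        intro e he
        rw [integral_add (integrable_const _) (hJint (Matrix.of fun i j => e (i, j)) he i j)]
        simp
      change e (i, j) + ∫ x, J (Matrix.of fun i j => e (i, j)) x i j ∂μ =
        e' (i, j) + ∫ x, J (Matrix.of fun i j => e' (i, j)) x i j ∂μ
      rw [hsum e he, hsum e' he']
      congr 1
      funext x
      have := aux_dep Φ hΦ _ _ (hGl (Matrix.of fun i j => e (i, j)) he x)
        (hGl (Matrix.of fun i j => e' (i, j)) he' x) j i (by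
          intro a b hab
          have := hag (a, b) hab
          simp [this])
      simp only [Matrix.sub_apply, Matrix.of_apply] at this
      simp only [hJ]
      linarith)
  refine ⟨Matrix.of fun i j => x (i, j), ⟨hxS, ?_⟩, ?_⟩
  · intro i j
    have := congrFun hxT (i, j)
    simpa using this
  · rintro E ⟨hE, hE0⟩
    have := hxu (fun p => E p.1 p.2) hE (by
      funext p
      have := hE0 p.1 p.2
      change E p.1 p.2 + ∫ x, J E x p.1 p.2 ∂μ = E p.1 p.2
      rw [this, add_zero])
    ext i j
    exact congrFun this (i, j)
end
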